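/- Let (X,d) be a proper complete separable metric space. Then every closed R-neighborhood of a compact subset of (P_1(X), w_1) is sequentially compact in the weak topology: if K is a compact subset of (P_1(X), w_1) and R >= 0, then the set N_R(K) = {nu in P_1(X) : w_1(mu, nu) <= R for some mu in K} is weakly sequentially compact (with respect to the topology induced from P(X)). -/

import Mathlib

open MeasureTheory Topology Filter Metric Set
open scoped ENNReal NNReal

noncomputable section

variable {X : Type*}

/-- `π` is a coupling of `μ` and `ν`, i.e. a measure on `X × X` with marginals `μ` and `ν`. -/
def IsCoupling [MeasurableSpace X] (π : Measure (X × X)) (μ ν : Measure X) : Prop :=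
  π.map Prod.fst = μ ∧ π.map Prod.snd = ν

/-- The `p`-th power optimal transport cost between `μ` and `ν`. -/
def wCost [MetricSpace X] [MeasurableSpace X] (p : ℝ) (μ ν : Measure X) : ℝ≥0∞ :=
  ⨅ π ∈ {π : Measure (X × X) | IsProbabilityMeasure π ∧ IsCoupling π μ ν},
    ∫⁻ q, ENNReal.ofReal (dist q.1 q.2 ^ p) ∂π

/-- The Wasserstein distance of order `p` (the `p`-th root of the optimal cost), as a real
number. -/
def Wp [MetricSpace X] [MeasurableSpace X] (p : ℝ) (μ ν : Measure X) : ℝ :=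
  ((wCost p μ ν) ^ (1 / p)).toReal

/-- `μ` has finite `p`-th moment about the base point `x₀`. -/
def FiniteMoment [MetricSpace X] [MeasurableSpace X] (p : ℝ) (x₀ : X) (μ : Measure X) : Prop :=
  ∫⁻ x, ENNReal.ofReal (dist x₀ x ^ p) ∂μ < ⊤

/-- The Wasserstein space `P_p(X)`: Borel probability measures with finite `p`-th moment. -/
def Pp [MetricSpace X] [MeasurableSpace X] (p : ℝ) (x₀ : X) : Set (Measure X) :=
  {μ | IsProbabilityMeasure μ ∧ FiniteMoment p x₀ μ}

/-- The convex combination `t • μ + (1 - t) • ν` of two measures. -/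
def mix [MeasurableSpace X] (t : ℝ) (μ ν : Measure X) : Measure X :=
  ENNReal.ofReal t • μ + ENNReal.ofReal (1 - t) • ν

/-- `μₙ → μ` in the weak topology: integrals of bounded continuous functions converge. -/
def WeakConv [MeasurableSpace X] [TopologicalSpace X] (μs : ℕ → Measure X) (μ : Measure X) :
    Prop :=
  ∀ g : BoundedContinuousFunction X ℝ,
    Tendsto (fun n => ∫ x, g x ∂(μs n)) atTop (𝓝 (∫ x, g x ∂μ))

/-- `μₙ → μ` with respect to the Wasserstein distance of order `p`. -/
def WpTendsto [MetricSpace X] [MeasurableSpace X] (p : ℝ) (μs : ℕ → Measure X)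
    (μ : Measure X) : Prop :=
  Tendsto (fun n => Wp p (μs n) μ) atTop (𝓝 0)

/-- A set of measures is sequentially compact for the Wasserstein distance of order `p`. -/
def WpSeqCompact [MetricSpace X] [MeasurableSpace X] (p : ℝ) (S : Set (Measure X)) : Prop :=
  ∀ μs : ℕ → Measure X, (∀ n, μs n ∈ S) →
    ∃ μ ∈ S, ∃ φ : ℕ → ℕ, StrictMono φ ∧ WpTendsto p (fun n => μs (φ n)) μ

/-- A set of measures is sequentially compact for the weak topology. -/
def WeakSeqCompact [MeasurableSpace X] [TopologicalSpace X] (S : Set (Measure X)) : Prop :=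
  ∀ μs : ℕ → Measure X, (∀ n, μs n ∈ S) →
    ∃ μ ∈ S, ∃ φ : ℕ → ℕ, StrictMono φ ∧ WeakConv (fun n => μs (φ n)) μ

/-!
Weak compactness of `N_R(K)` needs tightness and closedness. Moving mass by a bounded Wasserstein
distance keeps the `p`-th moments bounded, and on a proper space Markov's inequality turns bounded
moments into tightness. The limit stays in `N_R(K)` because the optimal cost is weakly lower
semicontinuous: couplings of two weakly convergent sequences are tight, and a limit of couplings
couples the limits.

A compact `K` has bounded moments by the triangle inequality, and it is weakly sequentially compact
because `d_LP ^ (p + 1) ≤ W_p ^ p`, where `d_LP` is the Lévy-Prokhorov distance.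
-/

section WeakTopology

lemma weakSeqCompact_iff_isSeqCompact [TopologicalSpace X] [MeasurableSpace X]
    [OpensMeasurableSpace X] {S : Set (Measure X)} (hS : ∀ μ ∈ S, IsProbabilityMeasure μ) :
    WeakSeqCompact S ↔ IsSeqCompact {μ : ProbabilityMeasure X | (μ : Measure X) ∈ S} := by
  constructor
  · intro h μs hμs
    obtain ⟨μ, hμ, φ, hφ, hlim⟩ := h (fun n ↦ μs n) hμs
    exact ⟨⟨μ, hS μ hμ⟩, hμ, φ, hφ,
      ProbabilityMeasure.tendsto_iff_forall_integral_tendsto.2 hlim⟩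
  · intro h μs hμs
    obtain ⟨μ, hμ, φ, hφ, hlim⟩ :=
      h (x := fun n ↦ (⟨μs n, hS _ (hμs n)⟩ : ProbabilityMeasure X)) hμs
    exact ⟨μ, hμ, φ, hφ, ProbabilityMeasure.tendsto_iff_forall_integral_tendsto.1 hlim⟩

lemma exists_subseq_tendsto_of_isTightMeasureSet [TopologicalSpace X]
    [TopologicalSpace.PseudoMetrizableSpace X] [T2Space X] [TopologicalSpace.SeparableSpace X]
    [MeasurableSpace X] [BorelSpace X] {μs : ℕ → ProbabilityMeasure X}
    (h : IsTightMeasureSet (range fun n ↦ (μs n : Measure X))) :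
    ∃ (μ : ProbabilityMeasure X) (φ : ℕ → ℕ), StrictMono φ ∧ Tendsto (μs ∘ φ) atTop (𝓝 μ) := by
  have hcompact : IsCompact (closure (range μs)) :=
    isCompact_closure_of_isTightMeasureSet <|
      h.subset (by rintro _ ⟨_, ⟨n, rfl⟩, rfl⟩; exact ⟨n, rfl⟩)
  obtain ⟨μ, -, φ, hφ, hlim⟩ := hcompact.isSeqCompact fun n ↦ subset_closure (mem_range_self n)
  exact ⟨μ, φ, hφ, hlim⟩

lemma isTightMeasureSet_range_of_tendsto [PseudoMetricSpace X] [CompleteSpace X]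
    [SecondCountableTopology X] [MeasurableSpace X] [BorelSpace X]
    {μs : ℕ → ProbabilityMeasure X} {μ : ProbabilityMeasure X} (h : Tendsto μs atTop (𝓝 μ)) :
    IsTightMeasureSet (range fun n ↦ (μs n : Measure X)) := by
  have hcompact : IsCompact (closure (range μs)) :=
    h.isCompact_insert_range.closure_of_subset (subset_insert _ _)
  refine (isTightMeasureSet_of_isCompact_closure hcompact).subset ?_
  rintro _ ⟨n, rfl⟩
  exact ⟨μs n, mem_range_self n, rfl⟩

lemma lintegral_ofReal_le_of_tendsto [TopologicalSpace X] [MeasurableSpace X]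
    [OpensMeasurableSpace X] [HasOuterApproxClosed X] {μs : ℕ → ProbabilityMeasure X}
    {μ : ProbabilityMeasure X} (h : Tendsto μs atTop (𝓝 μ)) {f : X → ℝ} (hf : Continuous f)
    (hf_nonneg : 0 ≤ f) {C : ℝ≥0∞}
    (hC : ∀ n, ∫⁻ x, ENNReal.ofReal (f x) ∂(μs n : Measure X) ≤ C) :
    ∫⁻ x, ENNReal.ofReal (f x) ∂(μ : Measure X) ≤ C :=
  (lintegral_le_liminf_lintegral_of_forall_isOpen_measure_le_liminf_measure hf hf_nonneg
    fun _ hG ↦ ProbabilityMeasure.le_liminf_measure_open_of_tendsto h hG).trans <|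
    liminf_le_of_frequently_le' (Frequently.of_forall hC)

end WeakTopology

section Distance

variable [PseudoMetricSpace X] {p : ℝ}

lemma ofReal_dist_rpow (hp : 0 ≤ p) (x y : X) :
    ENNReal.ofReal (dist x y ^ p) = edist x y ^ p := by
  rw [edist_dist, ENNReal.ofReal_rpow_of_nonneg dist_nonneg hp]

lemma ofReal_dist_rpow_le (hp : 0 ≤ p) (x y z : X) :
    ENNReal.ofReal (dist x z ^ p) ≤
      2 ^ p * (ENNReal.ofReal (dist x y ^ p) + ENNReal.ofReal (dist y z ^ p)) := by
  simp only [ofReal_dist_rpow hp]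
  calc edist x z ^ p ≤ (edist x y + edist y z) ^ p := by gcongr; exact edist_triangle x y z
    _ ≤ 2 ^ p * (edist x y ^ p + edist y z ^ p) :=
      ENNReal.add_rpow_le_two_rpow_mul_rpow_add_rpow _ _ hp

end Distance

namespace IsCoupling

variable [MeasurableSpace X] {μ ν : Measure X}

lemma swap {π : Measure (X × X)} (h : IsCoupling π μ ν) :
    IsCoupling (π.map Prod.swap) ν μ := by
  constructor
  · rw [Measure.map_map measurable_fst measurable_swap]
    exact h.2
  · rw [Measure.map_map measurable_snd measurable_swap]
    exact h.1

lemma prod [IsProbabilityMeasure μ] [IsProbabilityMeasure ν] : IsCoupling (μ.prod ν) μ ν := by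
  constructor <;> simp

lemma lintegral_fst {π : Measure (X × X)} (h : IsCoupling π μ ν) {f : X → ℝ≥0∞}
    (hf : Measurable f) : ∫⁻ q, f q.1 ∂π = ∫⁻ x, f x ∂μ := by
  rw [← h.1, lintegral_map hf measurable_fst]

lemma lintegral_snd {π : Measure (X × X)} (h : IsCoupling π μ ν) {f : X → ℝ≥0∞}
    (hf : Measurable f) : ∫⁻ q, f q.2 ∂π = ∫⁻ x, f x ∂ν := by
  rw [← h.2, lintegral_map hf measurable_snd]

lemma measure_le_add {π : Measure (X × X)} (h : IsCoupling π μ ν) {A B : Set X}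
    (hA : MeasurableSet A) (hB : MeasurableSet B) :
    μ A ≤ ν B + π {q | q.1 ∈ A ∧ q.2 ∉ B} := by
  rw [← h.1, ← h.2, Measure.map_apply measurable_fst hA, Measure.map_apply measurable_snd hB]
  refine (measure_mono fun q hq ↦ ?_).trans (measure_union_le _ _)
  by_cases hqB : q.2 ∈ B
  · exact Or.inl hqB
  · exact Or.inr ⟨hq, hqB⟩

lemma exists_subseq_tendsto [MetricSpace X] [CompleteSpace X] [SecondCountableTopology X]
    [BorelSpace X] {μs νs : ℕ → ProbabilityMeasure X} {μ ν : ProbabilityMeasure X}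
    {πs : ℕ → ProbabilityMeasure (X × X)} (hμ : Tendsto μs atTop (𝓝 μ))
    (hν : Tendsto νs atTop (𝓝 ν))
    (hπs : ∀ n, IsCoupling (πs n : Measure (X × X)) (μs n) (νs n)) :
    ∃ (π : ProbabilityMeasure (X × X)) (φ : ℕ → ℕ), StrictMono φ ∧
      IsCoupling (π : Measure (X × X)) μ ν ∧ Tendsto (πs ∘ φ) atTop (𝓝 π) := by
  have htight : IsTightMeasureSet (range fun n ↦ (πs n : Measure (X × X))) := by
    refine IsTightMeasureSet.prodMk ?_ ?_
    · rw [← range_comp]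
      convert! isTightMeasureSet_range_of_tendsto hμ with n
      exact (hπs n).1
    · rw [← range_comp]
      convert! isTightMeasureSet_range_of_tendsto hν with n
      exact (hπs n).2
  obtain ⟨π, φ, hφ, hlim⟩ := exists_subseq_tendsto_of_isTightMeasureSet htight
  have hfst := ProbabilityMeasure.tendsto_map_of_tendsto_of_continuous _ _ hlim continuous_fst
  have hsnd := ProbabilityMeasure.tendsto_map_of_tendsto_of_continuous _ _ hlim continuous_snd
  refine ⟨π, φ, hφ, ⟨?_, ?_⟩, hlim⟩
  · exact congrArg ProbabilityMeasure.toMeasure <| tendsto_nhds_unique hfst <|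
      (hμ.comp hφ.tendsto_atTop).congr fun n ↦ Subtype.ext (hπs (φ n)).1.symm
  · exact congrArg ProbabilityMeasure.toMeasure <| tendsto_nhds_unique hsnd <|
      (hν.comp hφ.tendsto_atTop).congr fun n ↦ Subtype.ext (hπs (φ n)).2.symm

end IsCoupling

section TransportCost

variable [MetricSpace X] [MeasurableSpace X] {p : ℝ} {μ ν : Measure X}

lemma exists_isCoupling_of_wCost_lt {C : ℝ≥0∞} (h : wCost p μ ν < C) :
    ∃ π : ProbabilityMeasure (X × X), IsCoupling (π : Measure (X × X)) μ ν ∧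
      ∫⁻ q, ENNReal.ofReal (dist q.1 q.2 ^ p) ∂(π : Measure (X × X)) < C := by
  simp only [wCost, iInf_lt_iff] at h
  obtain ⟨π, ⟨hπ_prob, hπ⟩, hπ_lt⟩ := h
  exact ⟨⟨π, hπ_prob⟩, hπ, hπ_lt⟩

lemma IsCoupling.wCost_le {π : Measure (X × X)} [IsProbabilityMeasure π] (h : IsCoupling π μ ν) :
    wCost p μ ν ≤ ∫⁻ q, ENNReal.ofReal (dist q.1 q.2 ^ p) ∂π :=
  iInf₂_le π ⟨inferInstance, h⟩

lemma Wp_nonneg : 0 ≤ Wp p μ ν := ENNReal.toReal_nonneg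

lemma ofReal_Wp_rpow (hp : 0 < p) (h : wCost p μ ν ≠ ⊤) :
    ENNReal.ofReal (Wp p μ ν ^ p) = wCost p μ ν := by
  rw [Wp, ENNReal.toReal_rpow, ← ENNReal.rpow_mul, one_div_mul_cancel hp.ne', ENNReal.rpow_one,
    ENNReal.ofReal_toReal h]

lemma Wp_le_iff_wCost_le {R : ℝ} (hp : 0 < p) (h : wCost p μ ν ≠ ⊤) (hR : 0 ≤ R) :
    Wp p μ ν ≤ R ↔ wCost p μ ν ≤ ENNReal.ofReal (R ^ p) := by
  rw [← ofReal_Wp_rpow hp h, ENNReal.ofReal_le_ofReal_iff (Real.rpow_nonneg hR p),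
    Real.rpow_le_rpow_iff Wp_nonneg hR hp]

lemma WpTendsto.tendsto_wCost {μs : ℕ → Measure X} (hp : 0 < p) (h : WpTendsto p μs μ)
    (hfin : ∀ n, wCost p (μs n) μ ≠ ⊤) : Tendsto (fun n ↦ wCost p (μs n) μ) atTop (𝓝 0) := by
  have hpow : Tendsto (fun n ↦ ENNReal.ofReal (Wp p (μs n) μ ^ p)) atTop (𝓝 0) := by
    have := ENNReal.tendsto_ofReal (Tendsto.rpow_const h (Or.inr hp.le))
    rwa [Real.zero_rpow hp.ne', ENNReal.ofReal_zero] at this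
  exact hpow.congr fun n ↦ ofReal_Wp_rpow hp (hfin n)

variable [OpensMeasurableSpace X] [SecondCountableTopology X]

lemma wCost_comm_le (p : ℝ) (μ ν : Measure X) : wCost p ν μ ≤ wCost p μ ν := by
  refine le_iInf₂ fun π hπ ↦ ?_
  have := hπ.1
  have : IsProbabilityMeasure (π.map Prod.swap) :=
    Measure.isProbabilityMeasure_map measurable_swap.aemeasurable
  refine hπ.2.swap.wCost_le.trans_eq ?_
  rw [lintegral_map (by fun_prop) measurable_swap]
  simp only [Prod.fst_swap, Prod.snd_swap, dist_comm]

lemma wCost_comm (p : ℝ) (μ ν : Measure X) : wCost p μ ν = wCost p ν μ :=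
  le_antisymm (wCost_comm_le p ν μ) (wCost_comm_le p μ ν)

end TransportCost

section LevyProkhorov

variable [MetricSpace X] [MeasurableSpace X] [OpensMeasurableSpace X] [SecondCountableTopology X]
  {p : ℝ}

lemma IsCoupling.levyProkhorovEDist_rpow_le {μ ν : Measure X} [IsProbabilityMeasure μ]
    [IsProbabilityMeasure ν] {π : Measure (X × X)} (hp : 0 ≤ p) (h : IsCoupling π μ ν) :
    levyProkhorovEDist μ ν ^ (p + 1) ≤ ∫⁻ q, ENNReal.ofReal (dist q.1 q.2 ^ p) ∂π := by
  set C := ∫⁻ q, ENNReal.ofReal (dist q.1 q.2 ^ p) ∂π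
  have hp1 : 0 < p + 1 := by positivity
  rw [← ENNReal.le_rpow_inv_iff hp1]
  refine levyProkhorovEDist_le_of_forall_le μ ν _ fun ε B hε hε_top hB ↦ ?_
  have hε_ne : ε ≠ 0 := (bot_lt_of_lt hε).ne'
  have hC_le : C / ε ^ p ≤ ε := by
    refine ENNReal.div_le_of_le_mul' ?_
    calc C ≤ ε ^ (p + 1) := (ENNReal.rpow_inv_le_iff hp1).1 hε.le
      _ = ε ^ p * ε := by rw [ENNReal.rpow_add _ _ hε_ne hε_top.ne, ENNReal.rpow_one]
  have hfar : {q : X × X | q.1 ∈ B ∧ q.2 ∉ thickening ε.toReal B} ⊆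
      {q | ε ^ p ≤ ENNReal.ofReal (dist q.1 q.2 ^ p)} := by
    rintro ⟨x, y⟩ ⟨hx, hy⟩
    have hxy : ε ≤ edist x y := by
      contrapose! hy
      rw [mem_thickening_iff_exists_edist_lt, ENNReal.ofReal_toReal hε_top.ne]
      exact ⟨x, hx, edist_comm x y ▸ hy⟩
    exact (ENNReal.rpow_le_rpow hxy hp).trans_eq (ofReal_dist_rpow hp x y).symm
  calc μ B ≤ ν (thickening ε.toReal B) + π {q | q.1 ∈ B ∧ q.2 ∉ thickening ε.toReal B} :=
        h.measure_le_add hB isOpen_thickening.measurableSet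
    _ ≤ ν (thickening ε.toReal B) + C / ε ^ p := by
        gcongr
        exact (measure_mono hfar).trans <| meas_ge_le_lintegral_div (by fun_prop)
          (ENNReal.rpow_pos hε_ne.bot_lt hε_top.ne).ne' (ENNReal.rpow_ne_top_of_nonneg hp hε_top.ne)
    _ ≤ ν (thickening ε.toReal B) + ε := by gcongr

lemma levyProkhorovEDist_rpow_le_wCost (hp : 0 ≤ p) (μ ν : Measure X) [IsProbabilityMeasure μ]
    [IsProbabilityMeasure ν] : levyProkhorovEDist μ ν ^ (p + 1) ≤ wCost p μ ν :=
  le_iInf₂ fun _ hπ ↦ hπ.2.levyProkhorovEDist_rpow_le hp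

lemma tendsto_of_tendsto_wCost (hp : 0 ≤ p) {μs : ℕ → ProbabilityMeasure X}
    {μ : ProbabilityMeasure X}
    (h : Tendsto (fun n ↦ wCost p (μs n : Measure X) μ) atTop (𝓝 0)) :
    Tendsto μs atTop (𝓝 μ) := by
  have hp1 : 0 < p + 1 := by positivity
  have hroot : Tendsto (fun n ↦ wCost p (μs n : Measure X) μ ^ (p + 1)⁻¹) atTop (𝓝 0) := by
    simpa [ENNReal.zero_rpow_of_pos (inv_pos.2 hp1)] using h.ennrpow_const (p + 1)⁻¹
  have hLP : Tendsto (fun n ↦ LevyProkhorov.ofMeasure (μs n)) atTop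
      (𝓝 (LevyProkhorov.ofMeasure μ)) := by
    refine tendsto_iff_edist_tendsto_0.2 (tendsto_of_tendsto_of_tendsto_of_le_of_le
      tendsto_const_nhds hroot (fun _ ↦ zero_le) fun n ↦ ?_)
    exact (ENNReal.le_rpow_inv_iff hp1).2 (levyProkhorovEDist_rpow_le_wCost hp (μs n : Measure X) μ)
  exact (LevyProkhorov.continuous_toMeasure_probabilityMeasure.tendsto _).comp hLP

end LevyProkhorov

section Moments

variable [MetricSpace X] [MeasurableSpace X] {p : ℝ}

/-- The `p`-th moment of `μ` about `x₀`, so that `FiniteMoment p x₀ μ` says `moment p x₀ μ < ⊤`. -/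
def moment (p : ℝ) (x₀ : X) (μ : Measure X) : ℝ≥0∞ :=
  ∫⁻ x, ENNReal.ofReal (dist x₀ x ^ p) ∂μ

/-- Uniform boundedness of the `p`-th moments of the measures in `S`; this is boundedness of `S` in
`P_p(X)`, expressed through distances to the Dirac mass at `x₀`. -/
def HasBoundedMoments (p : ℝ) (x₀ : X) (S : Set (Measure X)) : Prop :=
  ∃ M < ⊤, ∀ μ ∈ S, moment p x₀ μ ≤ M

variable [OpensMeasurableSpace X] {x₀ : X}

lemma HasBoundedMoments.isTightMeasureSet [ProperSpace X] {S : Set (Measure X)} (hp : 0 < p)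
    (hS : HasBoundedMoments p x₀ S) : IsTightMeasureSet S := by
  obtain ⟨M, hM, hSM⟩ := hS
  have hmarkov : ∀ r > 0, ⨆ μ ∈ S, μ (closedBall x₀ r)ᶜ ≤ M / ENNReal.ofReal (r ^ p) := by
    refine fun r hr ↦ iSup₂_le fun μ hμ ↦ ?_
    have hfar : (closedBall x₀ r)ᶜ ⊆
        {x | ENNReal.ofReal (r ^ p) ≤ ENNReal.ofReal (dist x₀ x ^ p)} := by
      intro x hx
      have hrx : r < dist x₀ x := by simpa [dist_comm] using hx
      exact ENNReal.ofReal_le_ofReal (Real.rpow_le_rpow hr.le hrx.le hp.le)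
    calc μ (closedBall x₀ r)ᶜ ≤ moment p x₀ μ / ENNReal.ofReal (r ^ p) :=
          (measure_mono hfar).trans (meas_ge_le_lintegral_div (by fun_prop)
            (by simpa using Real.rpow_pos_of_pos hr p) ENNReal.ofReal_ne_top)
      _ ≤ M / ENNReal.ofReal (r ^ p) := by gcongr; exact hSM μ hμ
  have hlim : Tendsto (fun r : ℝ ↦ M / ENNReal.ofReal (r ^ p)) atTop (𝓝 0) := by
    rw [← ENNReal.div_top (a := M)]
    exact ENNReal.Tendsto.const_div (ENNReal.tendsto_ofReal_atTop.comp (tendsto_rpow_atTop hp))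
      (Or.inr hM.ne)
  exact isTightMeasureSet_of_tendsto_measure_compl_closedBall <|
    tendsto_of_tendsto_of_tendsto_of_le_of_le' tendsto_const_nhds hlim
      (Eventually.of_forall fun _ ↦ zero_le) ((eventually_gt_atTop 0).mono hmarkov)

lemma moment_le_of_tendsto (hp : 0 ≤ p) {μs : ℕ → ProbabilityMeasure X}
    {μ : ProbabilityMeasure X} (h : Tendsto μs atTop (𝓝 μ)) {M : ℝ≥0∞}
    (hM : ∀ n, moment p x₀ (μs n) ≤ M) : moment p x₀ (μ : Measure X) ≤ M :=
  lintegral_ofReal_le_of_tendsto h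
    ((continuous_const.dist continuous_id).rpow_const fun _ ↦ Or.inr hp)
    (fun _ ↦ Real.rpow_nonneg dist_nonneg p) hM

variable [SecondCountableTopology X]

lemma moment_le (hp : 0 ≤ p) (x₀ : X) (μ ν : Measure X) :
    moment p x₀ ν ≤ 2 ^ p * (moment p x₀ μ + wCost p μ ν) := by
  have h2 : (2 : ℝ≥0∞) ^ p ≠ ⊤ := by finiteness
  have h2' : (2 : ℝ≥0∞) ^ p ≠ 0 := by positivity
  simp_rw [wCost, ENNReal.add_iInf, ENNReal.mul_iInf_of_ne h2' h2]
  refine le_iInf₂ fun π hπ ↦ ?_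
  rw [moment, moment, ← hπ.2.lintegral_fst (by fun_prop), ← hπ.2.lintegral_snd (by fun_prop),
    ← lintegral_add_left (by fun_prop), ← lintegral_const_mul _ (by fun_prop)]
  exact lintegral_mono fun q ↦ ofReal_dist_rpow_le hp x₀ q.1 q.2

lemma wCost_le_moment_add (hp : 0 ≤ p) (x₀ : X) (μ ν : Measure X) [IsProbabilityMeasure μ]
    [IsProbabilityMeasure ν] : wCost p μ ν ≤ 2 ^ p * (moment p x₀ μ + moment p x₀ ν) := by
  have hprod : IsCoupling (μ.prod ν) μ ν := .prod
  refine hprod.wCost_le.trans ?_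
  rw [moment, moment, ← hprod.lintegral_fst (by fun_prop), ← hprod.lintegral_snd (by fun_prop),
    ← lintegral_add_left (by fun_prop), ← lintegral_const_mul _ (by fun_prop)]
  refine lintegral_mono fun q ↦ ?_
  simpa only [dist_comm x₀ q.1] using ofReal_dist_rpow_le hp q.1 x₀ q.2

lemma wCost_ne_top {μ ν : Measure X} (hp : 0 ≤ p) (hμ : μ ∈ Pp p x₀) (hν : ν ∈ Pp p x₀) :
    wCost p μ ν ≠ ⊤ := by
  have := hμ.1
  have := hν.1
  refine ne_top_of_le_ne_top ?_ (wCost_le_moment_add hp x₀ μ ν)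
  exact ENNReal.mul_ne_top (by finiteness) (ENNReal.add_lt_top.2 ⟨hμ.2, hν.2⟩).ne

end Moments

section LowerSemicontinuity

variable [MetricSpace X] [CompleteSpace X] [SecondCountableTopology X] [MeasurableSpace X]
  [BorelSpace X] {p : ℝ} {μs νs : ℕ → ProbabilityMeasure X} {μ ν : ProbabilityMeasure X}

lemma wCost_le_of_tendsto (hp : 0 ≤ p) (hμ : Tendsto μs atTop (𝓝 μ))
    (hν : Tendsto νs atTop (𝓝 ν)) {C : ℝ≥0∞} (hC : ∀ n, wCost p (μs n : Measure X) (νs n) ≤ C) :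
    wCost p (μ : Measure X) ν ≤ C := by
  refine le_of_forall_gt_imp_ge_of_dense fun C' hC' ↦ ?_
  choose πs hπs hπs_lt using fun n ↦ exists_isCoupling_of_wCost_lt ((hC n).trans_lt hC')
  obtain ⟨π, φ, -, hπ, hlim⟩ := IsCoupling.exists_subseq_tendsto hμ hν hπs
  refine hπ.wCost_le.trans (lintegral_ofReal_le_of_tendsto hlim ?_ ?_ fun n ↦ (hπs_lt (φ n)).le)
  · exact continuous_dist.rpow_const fun _ ↦ Or.inr hp
  · exact fun _ ↦ Real.rpow_nonneg dist_nonneg p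

lemma Wp_le_of_tendsto {x₀ : X} (hp : 0 < p) (hμ_lim : Tendsto μs atTop (𝓝 μ))
    (hν_lim : Tendsto νs atTop (𝓝 ν)) (hμs : ∀ n, (μs n : Measure X) ∈ Pp p x₀)
    (hνs : ∀ n, (νs n : Measure X) ∈ Pp p x₀) (hμ : (μ : Measure X) ∈ Pp p x₀)
    (hν : (ν : Measure X) ∈ Pp p x₀) {R : ℝ} (hR : ∀ n, Wp p (μs n : Measure X) (νs n) ≤ R) :
    Wp p (μ : Measure X) ν ≤ R := by
  have hR_nonneg : 0 ≤ R := Wp_nonneg.trans (hR 0)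
  refine (Wp_le_iff_wCost_le hp (wCost_ne_top hp.le hμ hν) hR_nonneg).2 ?_
  exact wCost_le_of_tendsto hp.le hμ_lim hν_lim fun n ↦
    (Wp_le_iff_wCost_le hp (wCost_ne_top hp.le (hμs n) (hνs n)) hR_nonneg).1 (hR n)

end LowerSemicontinuity

section WassersteinCompact

variable [MetricSpace X] [MeasurableSpace X] [OpensMeasurableSpace X] [SecondCountableTopology X]
  {p : ℝ} {x₀ : X} {K : Set (Measure X)}

lemma WpSeqCompact.weakSeqCompact (hp : 0 < p) (hK_sub : K ⊆ Pp p x₀) (hK : WpSeqCompact p K) :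
    WeakSeqCompact K := by
  refine (weakSeqCompact_iff_isSeqCompact fun μ hμ ↦ (hK_sub hμ).1).2 fun μs hμs ↦ ?_
  obtain ⟨μ, hμ, φ, hφ, hlim⟩ := hK (fun n ↦ μs n) hμs
  exact ⟨⟨μ, (hK_sub hμ).1⟩, hμ, φ, hφ, tendsto_of_tendsto_wCost hp.le <|
    hlim.tendsto_wCost hp fun n ↦ wCost_ne_top hp.le (hK_sub (hμs (φ n))) (hK_sub hμ)⟩

lemma WpSeqCompact.hasBoundedMoments (hp : 0 < p) (hK_sub : K ⊆ Pp p x₀)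
    (hK : WpSeqCompact p K) : HasBoundedMoments p x₀ K := by
  by_contra hunbounded
  simp only [HasBoundedMoments, not_exists, not_and, not_forall, not_le] at hunbounded
  choose μs hμs hμs_gt using fun n : ℕ ↦ hunbounded n (ENNReal.natCast_lt_top n)
  obtain ⟨μ, hμ, φ, hφ, hlim⟩ := hK μs hμs
  have hcost := hlim.tendsto_wCost hp fun n ↦
    wCost_ne_top hp.le (hK_sub (hμs (φ n))) (hK_sub hμ)
  have hbound : ∀ᶠ n in atTop, (φ n : ℝ≥0∞) ≤ 2 ^ p * (moment p x₀ μ + 1) := by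
    filter_upwards [hcost.eventually_le_const one_pos] with n hn
    calc (φ n : ℝ≥0∞) ≤ moment p x₀ (μs (φ n)) := (hμs_gt (φ n)).le
      _ ≤ 2 ^ p * (moment p x₀ μ + wCost p μ (μs (φ n))) := moment_le hp.le x₀ _ _
      _ ≤ 2 ^ p * (moment p x₀ μ + 1) := by rw [wCost_comm]; gcongr
  have hfin : 2 ^ p * (moment p x₀ μ + 1) < ⊤ :=
    ENNReal.mul_lt_top (by finiteness) (ENNReal.add_lt_top.2 ⟨(hK_sub hμ).2, ENNReal.one_lt_top⟩)
  have hφ_top : Tendsto (fun n ↦ (φ n : ℝ≥0∞)) atTop (𝓝 ⊤) :=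
    ENNReal.tendsto_nat_nhds_top.comp hφ.tendsto_atTop
  obtain ⟨n, hle, hgt⟩ := (hbound.and (hφ_top.eventually_const_lt hfin)).exists
  exact hle.not_gt hgt

lemma HasBoundedMoments.closedNbhd (hp : 0 < p) (hK_sub : K ⊆ Pp p x₀)
    (hK : HasBoundedMoments p x₀ K) (R : ℝ) :
    HasBoundedMoments p x₀ {ν | ν ∈ Pp p x₀ ∧ ∃ μ ∈ K, Wp p μ ν ≤ R} := by
  obtain ⟨M, hM, hKM⟩ := hK
  refine ⟨2 ^ p * (M + ENNReal.ofReal (R ^ p)), by finiteness, ?_⟩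
  rintro ν ⟨hν, μ, hμ, hWp⟩
  have hcost : wCost p μ ν ≤ ENNReal.ofReal (R ^ p) :=
    (Wp_le_iff_wCost_le hp (wCost_ne_top hp.le (hK_sub hμ) hν) (Wp_nonneg.trans hWp)).1 hWp
  calc moment p x₀ ν ≤ 2 ^ p * (moment p x₀ μ + wCost p μ ν) := moment_le hp.le x₀ μ ν
    _ ≤ 2 ^ p * (M + ENNReal.ofReal (R ^ p)) := by gcongr; exact hKM μ hμ

end WassersteinCompact

theorem wasserstein_closed_nbhd_weakly_seq_compact_general
    [MetricSpace X] [MeasurableSpace X] [BorelSpace X] [ProperSpace X] {p : ℝ} (hp : 0 < p)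
    (x₀ : X) (K : Set (Measure X)) (hK_prob : ∀ μ ∈ K, IsProbabilityMeasure μ)
    (hK_mom : HasBoundedMoments p x₀ K) (hK_cpt : WeakSeqCompact K) (R : ℝ) :
    WeakSeqCompact {ν : Measure X | ν ∈ Pp p x₀ ∧ ∃ μ ∈ K, Wp p μ ν ≤ R} := by
  have hK_sub : K ⊆ Pp p x₀ := by
    obtain ⟨M, hM, hKM⟩ := hK_mom
    exact fun μ hμ ↦ ⟨hK_prob μ hμ, (hKM μ hμ).trans_lt hM⟩
  have hN_mom := hK_mom.closedNbhd hp hK_sub R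
  have hN_tight := hN_mom.isTightMeasureSet hp
  obtain ⟨M, hM, hNM⟩ := hN_mom
  rw [weakSeqCompact_iff_isSeqCompact hK_prob] at hK_cpt
  refine (weakSeqCompact_iff_isSeqCompact fun ν hν ↦ hν.1.1).2 fun νs hνs ↦ ?_
  choose hνs_mem μs hμs hWp using hνs
  obtain ⟨μ, hμ, φ, hφ, hμ_lim⟩ :=
    hK_cpt (x := fun n ↦ (⟨μs n, hK_prob _ (hμs n)⟩ : ProbabilityMeasure X)) hμs
  obtain ⟨ν, θ, hθ, hν_lim⟩ := exists_subseq_tendsto_of_isTightMeasureSet (μs := νs ∘ φ) <|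
    hN_tight.subset <| range_subset_iff.2 fun n ↦ ⟨hνs_mem (φ n), μs (φ n), hμs (φ n), hWp (φ n)⟩
  have hν : (ν : Measure X) ∈ Pp p x₀ :=
    ⟨inferInstance, (moment_le_of_tendsto hp.le hν_lim fun n ↦
      hNM _ ⟨hνs_mem _, _, hμs _, hWp _⟩).trans_lt hM⟩
  have hWp_lim : Wp p (μ : Measure X) ν ≤ R :=
    Wp_le_of_tendsto hp (hμ_lim.comp hθ.tendsto_atTop) hν_lim (fun _ ↦ hK_sub (hμs _))
      (fun _ ↦ hνs_mem _) (hK_sub hμ) hν fun _ ↦ hWp _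
  exact ⟨ν, ⟨hν, μ, hμ, hWp_lim⟩, φ ∘ θ, hφ.comp hθ, hν_lim⟩

/-- **`P₁(X)` of a proper space is weakly proper**: every closed `R`-neighborhood
`N_R(K) = {ν ∈ P₁(X) : ∃ μ ∈ K, w₁(μ,ν) ≤ R}` of a compact subset `K` of `(P₁(X), w₁)` is
sequentially compact in the weak topology induced from `P(X)`. -/
theorem wasserstein_closed_nbhd_weakly_seq_compact
    [MetricSpace X] [MeasurableSpace X] [BorelSpace X] [ProperSpace X] [CompleteSpace X]
    [TopologicalSpace.SeparableSpace X] (x₀ : X)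
    (K : Set (Measure X)) (hK_sub : K ⊆ Pp 1 x₀) (hK_cpt : WpSeqCompact 1 K)
    (R : ℝ) (hR : 0 ≤ R) :
    WeakSeqCompact {ν : Measure X | ν ∈ Pp 1 x₀ ∧ ∃ μ ∈ K, Wp 1 μ ν ≤ R} :=
  wasserstein_closed_nbhd_weakly_seq_compact_general one_pos x₀ K (fun _ hμ ↦ (hK_sub hμ).1)
    (hK_cpt.hasBoundedMoments one_pos hK_sub) (hK_cpt.weakSeqCompact one_pos hK_sub) R
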